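/- The generating polynomial ^ℓB_n(q, Y0, Y1, Z) := sum over w in B_n of q^{ℓ(w)} Y0^{pix^+ w} Y1^{pix^- w} Z^{neg w} satisfies ^ℓB_n(q,Y0,Y1,Z) = sum over i+j+k+l = n of the q-multinomial (n choose i,j,k,l)_q * q^{binom(j+k+1, 2)} * Y0^i * (Y1 Z)^j * (Z q^i)^k * D_{k+l}(q), where D_m(q) is the generating polynomial for derangements of order m by the major index. -/

import Mathlib

open Finset

attribute [local instance] Classical.propDecidable

noncomputable section

/-- The word `x_1 x_2 ... x_n` (0-indexed) of a signed permutation of order `n`,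
encoded as a pair (permutation, signs): `x_i = ±(σ(i)+1)`. -/
def sword (n : ℕ) (w : Equiv.Perm (Fin n) × (Fin n → Bool)) : ℕ → ℤ :=
  fun i => if h : i < n then
      (if w.2 ⟨i, h⟩ then -(((w.1 ⟨i, h⟩ : ℕ) : ℤ) + 1) else (((w.1 ⟨i, h⟩ : ℕ) : ℤ) + 1))
    else 0

/-- number of negative letters -/
def negStat (n : ℕ) (x : ℕ → ℤ) : ℕ := ((Finset.range n).filter (fun i => x i < 0)).card

/-- number of positive fixed points (`x_i = i`, 1-indexed) -/
def fixPlus (n : ℕ) (x : ℕ → ℤ) : ℕ :=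
  ((Finset.range n).filter (fun i => x i = (i : ℤ) + 1)).card

/-- number of negative fixed points (`x_i = -i`, 1-indexed) -/
def fixMinus (n : ℕ) (x : ℕ → ℤ) : ℕ :=
  ((Finset.range n).filter (fun i => x i = -((i : ℤ) + 1))).card

/-- major index of the word -/
def majStat (n : ℕ) (x : ℕ → ℤ) : ℕ :=
  ∑ i ∈ Finset.range (n - 1), if x (i + 1) < x i then i + 1 else 0

/-- number of inversions of the word -/
def invStat (n : ℕ) (x : ℕ → ℤ) : ℕ :=
  ((Finset.range n ×ˢ Finset.range n).filter (fun p => p.1 < p.2 ∧ x p.2 < x p.1)).card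

/-- length function `ℓ(w) = inv w + ∑_{x_i<0} |x_i|` -/
def lenStat (n : ℕ) (x : ℕ → ℤ) : ℕ :=
  invStat n x + ∑ i ∈ Finset.range n, if x i < 0 then (x i).natAbs else 0

/-- flag-major index `fmaj = 2 maj + neg` -/
def fmajStat (n : ℕ) (x : ℕ → ℤ) : ℕ := 2 * majStat n x + negStat n x

/-- the word `x_0 ... x_{m-1}` has its leftmost trough at position `2k` (1-indexed):
`x_1 > x_2 > ... > x_{2k}` and `x_{2k} < x_{2k+1}` (with `x_{m+1} = ∞`). -/
def IsDesarAt (m k : ℕ) (x : ℕ → ℤ) : Prop :=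
  1 ≤ k ∧ 2 * k ≤ m ∧ (∀ i, i + 1 < 2 * k → x (i + 1) < x i) ∧
    (2 * k = m ∨ x (2 * k - 1) < x (2 * k))

/-- a word of length `m` is a desarrangement (empty word included) -/
def IsDesar (m : ℕ) (x : ℕ → ℤ) : Prop :=
  m = 0 ∨ ∃ k, IsDesarAt m k x

/-- the length of the longest right factor of the word of length `n`
which is a desarrangement -/
def dlen (n : ℕ) (x : ℕ → ℤ) : ℕ :=
  sSup {m | m ≤ n ∧ IsDesar m (fun i => x (n - m + i))}

/-- number of letters of `w^-` in the pixed factorization `w = w^- w^+ w^d` -/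
def pixMinus (n : ℕ) (x : ℕ → ℤ) : ℕ :=
  ((Finset.range (n - dlen n x)).filter (fun i => x i < 0)).card

/-- number of letters of `w^+` in the pixed factorization `w = w^- w^+ w^d` -/
def pixPlus (n : ℕ) (x : ℕ → ℤ) : ℕ :=
  ((Finset.range (n - dlen n x)).filter (fun i => 0 < x i)).card

/-- the number of derangements of an `m`-element set -/
def dnum (m : ℕ) : ℕ :=
  (Finset.univ.filter (fun σ : Equiv.Perm (Fin m) => ∀ i, σ i ≠ i)).card

/-- the word of an ordinary permutation of `{1, ..., m}` -/
def pword (m : ℕ) (σ : Equiv.Perm (Fin m)) : ℕ → ℤ :=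
  fun i => if h : i < m then ((σ ⟨i, h⟩ : ℕ) : ℤ) + 1 else 0

/-- the q-ascending factorial `(q;q)_m` -/
def qq {K : Type*} [CommRing K] (q : K) (m : ℕ) : K :=
  ∏ i ∈ Finset.range m, (1 - q ^ (i + 1))

/-- `D_m(q)`: generating polynomial for derangements of order `m` by major index -/
def Dmaj {K : Type*} [CommRing K] (q : K) (m : ℕ) : K :=
  ∑ σ ∈ Finset.univ.filter (fun σ : Equiv.Perm (Fin m) => ∀ i, σ i ≠ i),
    q ^ majStat m (pword m σ)


/-!
Group the signed permutations by the set `L` of values that carry a minus sign; the remaining sum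
runs over the words without repetition in a fixed set of letters. The pixed factorization cuts such
a word into an increasing prefix and a desarrangement, so that the word amounts to a choice of the
letters of the prefix together with a desarrangement of the others. By the theorem of Désarménien
and Wachs, desarrangements by inversion number are equidistributed with derangements by major index:
both solve the same triangular system, since inversions and major index are both distributed as
`[n]_q!` (MacMahon) and since inserting fixed points into a derangement amounts to shuffling a word
with zeros. The sum over `L` is the one of the `q`-binomial theorem.
-/

section GaussianBinomial

variable {K : Type*} [CommRing K] (q : K)

/-- The Gaussian binomial coefficient `[i + j choose i]_q`, indexed by its two block sizes `i` and
`j` so that no truncated subtraction occurs in its recurrences. -/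
def gaussBinom : ℕ → ℕ → K
  | 0, _ => 1
  | _ + 1, 0 => 1
  | i + 1, j + 1 => gaussBinom i (j + 1) + q ^ (i + 1) * gaussBinom (i + 1) j

/-- The `q`-factorial `[n]_q!`. -/
def qFactorial (n : ℕ) : K := ∏ k ∈ range n, ∑ i ∈ range (k + 1), q ^ i

/-- The `q`-multinomial coefficient `(i + j + k + l choose i, j, k, l)_q`, as a polynomial in `q`,
so that it makes sense also where `(q;q)_m` vanishes. -/
def qMultinomial (i j k l : ℕ) : K :=
  gaussBinom q (j + k) (i + l) * gaussBinom q j k * gaussBinom q i l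

@[simp] lemma gaussBinom_zero_left (j : ℕ) : gaussBinom q 0 j = 1 := by
  simp only [gaussBinom]

@[simp] lemma gaussBinom_zero_right : ∀ i : ℕ, gaussBinom q i 0 = 1
  | 0 => by simp only [gaussBinom]
  | _ + 1 => by simp only [gaussBinom]

lemma gaussBinom_succ_succ (i j : ℕ) :
    gaussBinom q (i + 1) (j + 1)
      = gaussBinom q i (j + 1) + q ^ (i + 1) * gaussBinom q (i + 1) j := by
  simp only [gaussBinom]

lemma gaussBinom_succ_succ' (i j : ℕ) :
    gaussBinom q (i + 1) (j + 1)
      = q ^ (j + 1) * gaussBinom q i (j + 1) + gaussBinom q (i + 1) j := by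
  induction i generalizing j with
  | zero =>
    induction j with
    | zero => simp [gaussBinom_succ_succ, add_comm]
    | succ j ih =>
      have h := gaussBinom_succ_succ q 0 j
      rw [gaussBinom_succ_succ q 0 (j + 1)]
      simp only [gaussBinom_zero_left] at ih h ⊢
      linear_combination q * ih - h
  | succ i ihi =>
    induction j with
    | zero =>
      have h := ihi 0
      have h' := gaussBinom_succ_succ q (i + 1) 0
      have h'' := gaussBinom_succ_succ q i 0
      simp only [gaussBinom_zero_right] at h h' h'' ⊢
      linear_combination h' - q * h'' + h
    | succ j ihj =>
      linear_combination gaussBinom_succ_succ q (i + 1) (j + 1) + ihi (j + 1) + q ^ (i + 2) * ihj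
        - q ^ (j + 2) * gaussBinom_succ_succ q i (j + 1) - gaussBinom_succ_succ q (i + 1) j

lemma gaussBinom_comm (i j : ℕ) : gaussBinom q i j = gaussBinom q j i := by
  induction i generalizing j with
  | zero => simp
  | succ i ihi =>
    induction j with
    | zero => simp
    | succ j ihj => rw [gaussBinom_succ_succ, gaussBinom_succ_succ', ihi, ihj, add_comm]

lemma qq_succ (n : ℕ) : qq q (n + 1) = qq q n * (1 - q ^ (n + 1)) :=
  prod_range_succ _ _

lemma gaussBinom_mul_qq_mul_qq (i j : ℕ) :
    gaussBinom q i j * (qq q i * qq q j) = qq q (i + j) := by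
  induction i generalizing j with
  | zero => simp [qq]
  | succ i ihi =>
    induction j with
    | zero => simp [qq]
    | succ j ihj =>
      have hi := ihi (j + 1)
      have e : i + 1 + j = i + j + 1 := by ring
      rw [e] at ihj
      rw [← add_assoc] at hi
      rw [← add_assoc, e, gaussBinom_succ_succ, qq_succ q (i + j + 1), qq_succ q i]
      rw [qq_succ q i] at ihj
      rw [qq_succ q j] at hi ⊢
      linear_combination (1 - q ^ (i + 1)) * hi + q ^ (i + 1) * (1 - q ^ (j + 1)) * ihj

lemma qMultinomial_mul_qq (i j k l : ℕ) :
    qMultinomial q i j k l * (qq q i * qq q j * qq q k * qq q l) = qq q (i + j + k + l) := by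
  have h := gaussBinom_mul_qq_mul_qq q (j + k) (i + l)
  rw [← gaussBinom_mul_qq_mul_qq q j k, ← gaussBinom_mul_qq_mul_qq q i l] at h
  rw [show i + j + k + l = j + k + (i + l) by ring, ← h, qMultinomial]
  ring

lemma sum_antidiagonal_gaussBinom_succ (g : ℕ → ℕ → K) (n : ℕ) :
    ∑ p ∈ antidiagonal (n + 1), gaussBinom q p.1 p.2 * g p.1 p.2
      = ∑ p ∈ antidiagonal n,
          gaussBinom q p.1 p.2 * (g p.1 (p.2 + 1) + q ^ p.2 * g (p.1 + 1) p.2) := by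
  cases n with
  | zero => simp [Finset.Nat.sum_antidiagonal_succ]
  | succ n =>
    simp only [mul_add, sum_add_distrib]
    rw [Finset.Nat.sum_antidiagonal_succ (n := n), Finset.Nat.sum_antidiagonal_succ' (n := n),
      Finset.Nat.sum_antidiagonal_succ, Finset.Nat.sum_antidiagonal_succ']
    simp only [gaussBinom_succ_succ', gaussBinom_zero_left, gaussBinom_zero_right, add_mul,
      sum_add_distrib, pow_zero, one_mul, mul_left_comm, mul_assoc]
    ring

end GaussianBinomial

section Shuffle

variable {K : Type*} [CommRing K] (q : K)

lemma majStat_succ (n : ℕ) (x : ℕ → ℤ) :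
    majStat (n + 2) x = majStat (n + 1) x + if x (n + 1) < x n then n + 1 else 0 :=
  sum_range_succ _ _

lemma majStat_congr {n : ℕ} {x y : ℕ → ℤ}
    (h : ∀ i, i + 1 < n → (x (i + 1) < x i ↔ y (i + 1) < y i)) : majStat n x = majStat n y :=
  sum_congr rfl fun i hi => if_congr (h i (by have := mem_range.1 hi; omega)) rfl rfl

/-- The word with the letters of `u`, in their order, in the positions `C` and the letter `0` in
all the other positions. -/
def shuffle (u : ℕ → ℤ) (C : Finset ℕ) : ℕ → ℤ :=
  fun i => if i ∈ C then u #(C.filter (· < i)) else 0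

lemma shuffle_of_notMem (u : ℕ → ℤ) {C : Finset ℕ} {i : ℕ} (hi : i ∉ C) : shuffle u C i = 0 :=
  if_neg hi

lemma shuffle_insert_of_lt (u : ℕ → ℤ) (C : Finset ℕ) {n i : ℕ} (hi : i < n) :
    shuffle u (insert n C) i = shuffle u C i := by
  simp only [shuffle, filter_insert, not_lt_of_gt hi, if_false, mem_insert, hi.ne, false_or]

lemma shuffle_insert_self (u : ℕ → ℤ) {C : Finset ℕ} {n : ℕ} (hC : C ⊆ range n) :
    shuffle u (insert n C) n = u #C := by
  have hfilter : (insert n C).filter (· < n) = C := by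
    simpa only [filter_insert, lt_irrefl, if_false, filter_eq_self] using
      fun i hi => mem_range.1 (hC hi)
  simp only [shuffle, mem_insert_self, if_true, hfilter]

lemma majStat_shuffle_insert (u : ℕ → ℤ) (C : Finset ℕ) (n : ℕ) :
    majStat n (shuffle u (insert n C)) = majStat n (shuffle u C) :=
  majStat_congr fun i hi => by
    rw [shuffle_insert_of_lt u C hi, shuffle_insert_of_lt u C (by omega : i < n)]

lemma sum_powersetCard_range_succ (n a : ℕ) (f : Finset ℕ → K) :
    ∑ C ∈ powersetCard (a + 1) (range (n + 1)), f C
      = ∑ C ∈ powersetCard (a + 1) (range n), f C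
        + ∑ C ∈ powersetCard a (range n), f (insert n C) := by
  have hn : ∀ {b} {C : Finset ℕ}, C ∈ powersetCard b (range n) → n ∉ C := fun hC hmem =>
    notMem_range_self ((mem_powersetCard.1 hC).1 hmem)
  rw [range_add_one, powersetCard_succ_insert notMem_range_self, sum_union, sum_image]
  · intro C hC D hD h
    rw [← erase_insert (hn hC), h, erase_insert (hn hD)]
  · simp only [disjoint_left, mem_image]
    rintro _ hC ⟨D, _, rfl⟩
    exact hn hC (mem_insert_self n D)

/-- The generating polynomial, by major index, of the shuffles of the first `a` letters of `u` with
zeros that have length `n + 1` and last letter `0`. -/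
def shuffleZeroLast (u : ℕ → ℤ) (n a : ℕ) : K :=
  ∑ C ∈ powersetCard a (range n), q ^ majStat (n + 1) (shuffle u C)

/-- The generating polynomial, by major index, of the shuffles of the first `a + 1` letters of `u`
with zeros that have length `n + 1` and last letter `u a`. -/
def shuffleLetterLast (u : ℕ → ℤ) (n a : ℕ) : K :=
  ∑ C ∈ powersetCard a (range n), q ^ majStat (n + 1) (shuffle u (insert n C))

lemma shuffleZeroLast_succ_succ (u : ℕ → ℤ) (n a : ℕ) :
    shuffleZeroLast q u (n + 1) (a + 1)
      = shuffleZeroLast q u n (a + 1)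
        + q ^ (if 0 < u a then n + 1 else 0) * shuffleLetterLast q u n a := by
  unfold shuffleZeroLast shuffleLetterLast
  rw [sum_powersetCard_range_succ, mul_sum]
  congr 1 <;> refine sum_congr rfl fun C hC => ?_ <;> obtain ⟨hC, hcard⟩ := mem_powersetCard.1 hC
  · rw [majStat_succ, shuffle_of_notMem u fun h => notMem_range_self (hC h),
      shuffle_of_notMem u fun h => by simpa using hC h]
    simp
  · have h : n + 1 ∉ insert n C := by
      simpa using fun h => by simpa using hC h
    rw [majStat_succ, shuffle_of_notMem u h, shuffle_insert_self u hC, hcard, pow_add, mul_comm]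

lemma shuffleLetterLast_succ_zero (u : ℕ → ℤ) (n : ℕ) :
    shuffleLetterLast q u (n + 1) 0 = q ^ (if u 0 < 0 then n + 1 else 0) := by
  rw [shuffleLetterLast, powersetCard_zero, sum_singleton, majStat_succ, majStat_shuffle_insert,
    shuffle_insert_self u (empty_subset _), shuffle_insert_of_lt u _ n.lt_succ_self,
    shuffle_of_notMem u (notMem_empty _), card_empty]
  split_ifs <;> simp [majStat, shuffle, *]

lemma shuffleLetterLast_succ_succ (u : ℕ → ℤ) (n a : ℕ) :
    shuffleLetterLast q u (n + 1) (a + 1)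
      = q ^ (if u (a + 1) < 0 then n + 1 else 0) * shuffleZeroLast q u n (a + 1)
        + q ^ (if u (a + 1) < u a then n + 1 else 0) * shuffleLetterLast q u n a := by
  unfold shuffleZeroLast shuffleLetterLast
  rw [sum_powersetCard_range_succ, mul_sum, mul_sum]
  congr 1 <;> refine sum_congr rfl fun C hC => ?_ <;> obtain ⟨hC, hcard⟩ := mem_powersetCard.1 hC
  · rw [majStat_succ, majStat_shuffle_insert, shuffle_insert_of_lt u _ n.lt_succ_self,
      shuffle_insert_self u (hC.trans (range_mono n.le_succ)), hcard,
      shuffle_of_notMem u fun h => notMem_range_self (hC h), pow_add, mul_comm]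
  · have hC' : insert n C ⊆ range (n + 1) := by
      rw [range_add_one]
      exact insert_subset_insert _ hC
    have hcard' : #(insert n C) = a + 1 := by
      rw [card_insert_of_notMem fun h => notMem_range_self (hC h), hcard]
    rw [majStat_succ, majStat_shuffle_insert, shuffle_insert_of_lt u _ n.lt_succ_self,
      shuffle_insert_self u hC', hcard', shuffle_insert_self u hC, hcard, pow_add, mul_comm]

lemma shuffleZeroLast_self (u : ℕ → ℤ) (n : ℕ) : shuffleZeroLast q u n (n + 1) = 0 := by
  rw [shuffleZeroLast, powersetCard_eq_empty.2 (by simp), sum_empty]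

variable {u : ℕ → ℤ} {N : ℕ}

lemma shuffle_last_eq (hu : ∀ i < N, u i ≠ 0) (n : ℕ) :
    (∀ a b, a + b = n → a < N → shuffleLetterLast q u n a
        = q ^ (majStat (a + 1) u + if u a < 0 then b else 0) * gaussBinom q a b) ∧
      ∀ a b, a + 1 + b = n → a < N → shuffleZeroLast q u n (a + 1)
        = q ^ (majStat (a + 1) u + if u a < 0 then 0 else a + 1) * gaussBinom q (a + 1) b := by
  induction n with
  | zero =>
    refine ⟨fun a b h _ => ?_, fun a b h _ => by omega⟩
    obtain ⟨rfl, rfl⟩ : a = 0 ∧ b = 0 := by omega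
    simp [shuffleLetterLast, majStat]
  | succ n ih =>
    obtain ⟨ihLetter, ihZero⟩ := ih
    refine ⟨?_, ?_⟩
    · rintro (_ | a) b hab ha
      · obtain rfl : b = n + 1 := by omega
        simp [shuffleLetterLast_succ_zero, majStat]
      obtain rfl : n = a + b := by omega
      have _ := hu a (by omega)
      have _ := hu (a + 1) ha
      rw [shuffleLetterLast_succ_succ, ihLetter a b rfl (by omega), majStat_succ]
      rcases b with _ | b
      · rw [add_zero, shuffleZeroLast_self, gaussBinom_zero_right, gaussBinom_zero_right]
        simp [pow_add, mul_comm]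
      rw [ihZero a b (by omega) (by omega)]
      split_ifs <;> first
        | omega
        | (rw [gaussBinom_succ_succ]; ring1)
        | (rw [gaussBinom_succ_succ']; ring1)
    · intro a b hab ha
      obtain rfl : n = a + b := by omega
      have _ := hu a ha
      rw [shuffleZeroLast_succ_succ, ihLetter a b rfl ha]
      rcases b with _ | b
      · rw [add_zero, shuffleZeroLast_self, gaussBinom_zero_right, gaussBinom_zero_right]
        split_ifs <;> first | omega | simp [pow_add, mul_comm]
      rw [ihZero a b (by omega) ha]
      split_ifs <;> first
        | omega
        | (rw [gaussBinom_succ_succ']; ring1)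

lemma sum_pow_majStat_shuffle (hu : ∀ i < N, u i ≠ 0) (b : ℕ) :
    ∑ C ∈ powersetCard N (range (N + b)), q ^ majStat (N + b) (shuffle u C)
      = q ^ majStat N u * gaussBinom q N b := by
  rcases N with _ | a
  · simp [majStat, shuffle]
  obtain ⟨hLetter, -⟩ := shuffle_last_eq q hu (a + b)
  rw [show a + 1 + b = a + b + 1 by ring, sum_powersetCard_range_succ]
  change shuffleZeroLast q u (a + b) (a + 1) + shuffleLetterLast q u (a + b) a = _
  rw [hLetter a b rfl a.lt_succ_self]
  rcases b with _ | b
  · rw [add_zero, shuffleZeroLast_self]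
    simp
  rw [(shuffle_last_eq q hu (a + (b + 1))).2 a b (by ring) a.lt_succ_self]
  split_ifs
  · rw [gaussBinom_succ_succ']; ring
  · rw [gaussBinom_succ_succ]; ring

end Shuffle

section Derangements

variable {n m : ℕ}

/-- The word of a permutation `σ` in which each letter is replaced by `0` at a fixed point, and
lowered below `0` where `σ i < i`. It has the same descents as `σ`, and it is what makes inserting
fixed points into a derangement a shuffle with zeros. -/
def excedanceWord (σ : Equiv.Perm (Fin n)) : ℕ → ℤ := fun i =>
  if h : i < n then
    if σ ⟨i, h⟩ < ⟨i, h⟩ then (σ ⟨i, h⟩ : ℤ) - n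
    else if σ ⟨i, h⟩ = ⟨i, h⟩ then 0 else (σ ⟨i, h⟩ : ℤ) + 1
  else 0

lemma excedanceWord_val (σ : Equiv.Perm (Fin n)) (i : Fin n) :
    excedanceWord σ i
      = if (σ i : ℕ) < i then (σ i : ℤ) - n else if (σ i : ℕ) = i then 0 else (σ i : ℤ) + 1 := by
  simp only [excedanceWord, i.2, dite_true, Fin.eta, Fin.lt_def, Fin.ext_iff]

lemma excedanceWord_ne_zero {α : Equiv.Perm (Fin m)} (hα : ∀ i, α i ≠ i) {i : ℕ} (hi : i < m) :
    excedanceWord α i ≠ 0 := by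
  have h := excedanceWord_val α ⟨i, hi⟩
  have := Fin.val_ne_of_ne (hα ⟨i, hi⟩)
  have := (α ⟨i, hi⟩).2
  simp only at *
  split_ifs at h <;> omega

lemma majStat_excedanceWord (σ : Equiv.Perm (Fin n)) :
    majStat n (excedanceWord σ) = majStat n (pword n σ) := by
  refine majStat_congr fun i hi => ?_
  have hx := excedanceWord_val σ ⟨i, by omega⟩
  have hy := excedanceWord_val σ ⟨i + 1, hi⟩
  have hne : (σ ⟨i, by omega⟩ : ℕ) ≠ σ ⟨i + 1, hi⟩ :=
    Fin.val_ne_of_ne (σ.injective.ne (by simp))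
  have := (σ ⟨i, by omega⟩).2
  have := (σ ⟨i + 1, hi⟩).2
  simp only [pword, hi, (by omega : i < n), dite_true] at *
  split_ifs at hx hy <;> omega

/-- The permutation acting on the `m`-element set `C` as `α` acts on `Fin m`, through the increasing
enumeration of `C`, and fixing the other points. -/
def extendPerm {C : Finset (Fin n)} (hC : #C = m) (α : Equiv.Perm (Fin m)) :
    Equiv.Perm (Fin n) :=
  α.extendDomain (p := (· ∈ C)) (C.orderIsoOfFin hC).toEquiv

variable {C : Finset (Fin n)} (hC : #C = m)

include hC in
lemma exists_orderEmbOfFin_eq {i : Fin n} (hi : i ∈ C) : ∃ a, C.orderEmbOfFin hC a = i := by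
  rwa [← Set.mem_range, range_orderEmbOfFin]

lemma extendPerm_orderEmbOfFin (α : Equiv.Perm (Fin m)) (a : Fin m) :
    extendPerm hC α (C.orderEmbOfFin hC a) = C.orderEmbOfFin hC (α a) :=
  α.extendDomain_apply_image (C.orderIsoOfFin hC).toEquiv a

lemma extendPerm_of_notMem (α : Equiv.Perm (Fin m)) {i : Fin n} (hi : i ∉ C) :
    extendPerm hC α i = i :=
  α.extendDomain_apply_not_subtype _ hi

lemma extendPerm_injective : Function.Injective (extendPerm hC) :=
  Equiv.Perm.extendDomainHom_injective _

lemma support_extendPerm_eq_iff {α : Equiv.Perm (Fin m)} :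
    (extendPerm hC α).support = C ↔ ∀ a, α a ≠ a := by
  have hmove (a : Fin m) : C.orderEmbOfFin hC a ∈ (extendPerm hC α).support ↔ α a ≠ a := by
    rw [Equiv.Perm.mem_support, extendPerm_orderEmbOfFin, ne_eq, EmbeddingLike.apply_eq_iff_eq]
  refine ⟨fun h a => (hmove a).1 (h.symm.subset (orderEmbOfFin_mem C hC a)), fun h => ?_⟩
  ext i
  refine ⟨fun hi => ?_, fun hi => ?_⟩
  · by_contra hiC
    exact Equiv.Perm.mem_support.1 hi (extendPerm_of_notMem hC α hiC)
  · obtain ⟨a, rfl⟩ := exists_orderEmbOfFin_eq hC hi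
    exact (hmove a).2 (h a)

lemma exists_extendPerm_eq {σ : Equiv.Perm (Fin n)} (hσ : σ.support ⊆ C) :
    ∃ α, extendPerm hC α = σ := by
  have hfix : ∀ i, i ∉ C → σ i = i := fun i hi => Equiv.Perm.notMem_support.1 fun h => hi (hσ h)
  have hmem : ∀ i, σ i ∈ C ↔ i ∈ C := fun i => by
    by_cases hi : σ i = i
    · rw [hi]
    · have h : i ∈ σ.support := Equiv.Perm.mem_support.2 hi
      exact iff_of_true (hσ (Equiv.Perm.apply_mem_support.2 h)) (hσ h)
  refine ⟨(C.orderIsoOfFin hC).toEquiv.symm.permCongr (σ.subtypePerm hmem), Equiv.ext fun i => ?_⟩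
  by_cases hi : i ∈ C
  · rw [extendPerm, Equiv.Perm.extendDomain_apply_subtype _ _ hi]
    simp
  · rw [extendPerm_of_notMem hC _ hi, hfix i hi]

lemma shuffle_map_orderEmbOfFin (u : ℕ → ℤ) (a : Fin m) :
    shuffle u (C.map Fin.valEmbedding) (C.orderEmbOfFin hC a) = u a := by
  have hmem : (C.orderEmbOfFin hC a : ℕ) ∈ C.map Fin.valEmbedding :=
    mem_map_of_mem Fin.valEmbedding (orderEmbOfFin_mem C hC a)
  have hbelow : (C.map Fin.valEmbedding).filter (· < (C.orderEmbOfFin hC a : ℕ))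
      = ((Iio a).map (C.orderEmbOfFin hC).toEmbedding).map Fin.valEmbedding := by
    rw [filter_map]
    congr 1
    ext i
    simp only [mem_filter, mem_map, mem_Iio, Function.comp, Fin.valEmbedding_apply]
    constructor
    · rintro ⟨hi, hlt⟩
      obtain ⟨b, rfl⟩ := exists_orderEmbOfFin_eq hC hi
      exact ⟨b, (C.orderEmbOfFin hC).lt_iff_lt.1 hlt, rfl⟩
    · rintro ⟨b, hb, rfl⟩
      exact ⟨orderEmbOfFin_mem C hC b, (C.orderEmbOfFin hC).lt_iff_lt.2 hb⟩
  rw [shuffle, if_pos hmem, hbelow, card_map, card_map, Fin.card_Iio]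

lemma shuffle_map_of_notMem (u : ℕ → ℤ) {i : Fin n} (hi : i ∉ C) :
    shuffle u (C.map Fin.valEmbedding) i = 0 :=
  shuffle_of_notMem u (by simpa [Fin.val_inj] using hi)

lemma excedanceWord_extendPerm_lt_iff (α : Equiv.Perm (Fin m)) (i j : Fin n) :
    excedanceWord (extendPerm hC α) i < excedanceWord (extendPerm hC α) j
      ↔ shuffle (excedanceWord α) (C.map Fin.valEmbedding) i
        < shuffle (excedanceWord α) (C.map Fin.valEmbedding) j := by
  have hlt (a b : Fin m) : (C.orderEmbOfFin hC a : ℕ) < C.orderEmbOfFin hC b ↔ (a : ℕ) < b :=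
    (C.orderEmbOfFin hC).lt_iff_lt
  have heq (a b : Fin m) : (C.orderEmbOfFin hC a : ℕ) = C.orderEmbOfFin hC b ↔ (a : ℕ) = b := by
    rw [Fin.val_inj, Fin.val_inj, EmbeddingLike.apply_eq_iff_eq]
  have hin (a : Fin m) : excedanceWord (extendPerm hC α) (C.orderEmbOfFin hC a)
      = if (α a : ℕ) < a then (C.orderEmbOfFin hC (α a) : ℤ) - n
        else if (α a : ℕ) = a then 0 else (C.orderEmbOfFin hC (α a) : ℤ) + 1 := by
    simp only [excedanceWord_val, extendPerm_orderEmbOfFin, hlt, heq]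
  have hout {k : Fin n} (hk : k ∉ C) : excedanceWord (extendPerm hC α) k = 0 := by
    simp [excedanceWord_val, extendPerm_of_notMem hC α hk]
  by_cases hi : i ∈ C <;> by_cases hj : j ∈ C
  · obtain ⟨a, rfl⟩ := exists_orderEmbOfFin_eq hC hi
    obtain ⟨b, rfl⟩ := exists_orderEmbOfFin_eq hC hj
    rw [hin, hin, shuffle_map_orderEmbOfFin, shuffle_map_orderEmbOfFin, excedanceWord_val,
      excedanceWord_val]
    have := hlt (α a) (α b)
    split_ifs <;> omega
  · obtain ⟨a, rfl⟩ := exists_orderEmbOfFin_eq hC hi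
    rw [hin, hout hj, shuffle_map_orderEmbOfFin, shuffle_map_of_notMem _ hj, excedanceWord_val]
    split_ifs <;> omega
  · obtain ⟨b, rfl⟩ := exists_orderEmbOfFin_eq hC hj
    rw [hin, hout hi, shuffle_map_orderEmbOfFin, shuffle_map_of_notMem _ hi, excedanceWord_val]
    split_ifs <;> omega
  · rw [hout hi, hout hj, shuffle_map_of_notMem _ hi, shuffle_map_of_notMem _ hj]

lemma majStat_pword_extendPerm (α : Equiv.Perm (Fin m)) :
    majStat n (pword n (extendPerm hC α))
      = majStat n (shuffle (excedanceWord α) (C.map Fin.valEmbedding)) := by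
  rw [← majStat_excedanceWord]
  exact majStat_congr fun i hi =>
    excedanceWord_extendPerm_lt_iff hC α ⟨i + 1, hi⟩ ⟨i, by omega⟩

variable {K : Type*} [CommRing K] (q : K)

include hC in
lemma sum_pow_majStat_of_support_eq :
    ∑ σ : Equiv.Perm (Fin n) with σ.support = C, q ^ majStat n (pword n σ)
      = ∑ α : Equiv.Perm (Fin m) with ∀ i, α i ≠ i,
          q ^ majStat n (shuffle (excedanceWord α) (C.map Fin.valEmbedding)) := by
  symm
  refine sum_bij (fun α _ => extendPerm hC α) (fun α hα => ?_)
    (fun _ _ _ _ h => extendPerm_injective hC h) (fun σ hσ => ?_)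
    fun α _ => by rw [majStat_pword_extendPerm]
  · simpa only [mem_filter_univ, support_extendPerm_eq_iff] using hα
  · obtain ⟨α, rfl⟩ := exists_extendPerm_eq hC (mem_filter_univ σ |>.1 hσ).subset
    exact ⟨α, by simpa only [mem_filter_univ, support_extendPerm_eq_iff] using hσ, rfl⟩

theorem sum_pow_majStat_eq_sum_gaussBinom_mul_Dmaj (n : ℕ) :
    ∑ σ : Equiv.Perm (Fin n), q ^ majStat n (pword n σ)
      = ∑ p ∈ antidiagonal n, gaussBinom q p.1 p.2 * Dmaj q p.1 := by
  have hcard (m j : ℕ) (hn : m + j = n) :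
      ∑ C ∈ powersetCard m (univ : Finset (Fin n)),
          ∑ σ : Equiv.Perm (Fin n) with σ.support = C, q ^ majStat n (pword n σ)
        = gaussBinom q m j * Dmaj q m := by
    calc
      _ = ∑ α : Equiv.Perm (Fin m) with ∀ i, α i ≠ i,
            ∑ C ∈ powersetCard m (univ : Finset (Fin n)),
              q ^ majStat n (shuffle (excedanceWord α) (C.map Fin.valEmbedding)) := by
          rw [sum_comm]
          exact sum_congr rfl fun C hC =>
            sum_pow_majStat_of_support_eq (mem_powersetCard.1 hC).2 q
      _ = ∑ α : Equiv.Perm (Fin m) with ∀ i, α i ≠ i,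
            q ^ majStat m (pword m α) * gaussBinom q m j := by
          refine sum_congr rfl fun α hα => ?_
          rw [← majStat_excedanceWord, ← sum_pow_majStat_shuffle q
            (fun i => excedanceWord_ne_zero (mem_filter_univ α |>.1 hα)), hn,
            ← Nat.Iio_eq_range, ← Fin.map_valEmbedding_univ, powersetCard_map, sum_map]
          rfl
      _ = _ := by rw [← sum_mul, mul_comm, Dmaj]
  rw [← sum_fiberwise univ (fun σ : Equiv.Perm (Fin n) => σ.support), ← powerset_univ,
    sum_powerset, card_univ, Fintype.card_fin,
    Finset.Nat.sum_antidiagonal_eq_sum_range_succ_mk]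
  exact sum_congr rfl fun m hm => hcard m _ (by have := mem_range.1 hm; omega)

end Derangements

section Words

variable {α : Type*}

/-- The words in which each letter of `X` occurs exactly once, and no other letter occurs. -/
def words (X : Finset α) : Finset (List α) := ⟨X.val.lists, Multiset.lists_nodup_finset X⟩

lemma mem_words {X : Finset α} {l : List α} : l ∈ words X ↔ l.Nodup ∧ l.toFinset = X := by
  rw [words, mem_mk, Multiset.mem_lists_iff]
  constructor
  · intro h
    have hnodup : (l : Multiset α).Nodup := by
      have := X.nodup
      rwa [h] at this
    rw [Multiset.coe_nodup] at hnodup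
    exact ⟨hnodup, val_injective (by rw [List.toFinset_val, hnodup.dedup]; exact h.symm)⟩
  · rintro ⟨hnodup, rfl⟩
    rw [List.toFinset_val, hnodup.dedup]
    rfl

lemma length_of_mem_words {X : Finset α} {l : List α} (hl : l ∈ words X) : l.length = #X := by
  rw [← (mem_words.1 hl).2, List.toFinset_card_of_nodup (mem_words.1 hl).1]

@[simp] lemma words_empty : words (∅ : Finset α) = {[]} := by
  ext l
  rw [mem_words, List.toFinset_eq_empty_iff, mem_singleton]
  exact ⟨And.right, fun h => ⟨h ▸ List.nodup_nil, h⟩⟩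

lemma cons_mem_words {X : Finset α} {a : α} {l : List α} :
    a :: l ∈ words X ↔ a ∈ X ∧ l ∈ words (X.erase a) := by
  simp only [mem_words, List.nodup_cons, List.toFinset_cons]
  constructor
  · rintro ⟨⟨ha, hl⟩, rfl⟩
    exact ⟨mem_insert_self _ _, hl, (erase_insert (by simpa using ha)).symm⟩
  · rintro ⟨ha, hl, he⟩
    refine ⟨⟨fun h => ?_, hl⟩, by rw [he, insert_erase ha]⟩
    exact notMem_erase a X (he ▸ List.mem_toFinset.2 h)

lemma sum_words_eq_sum_cons {M : Type*} [AddCommMonoid M] {X : Finset α} (hX : X.Nonempty)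
    (F : List α → M) :
    ∑ l ∈ words X, F l = ∑ a ∈ X, ∑ l ∈ words (X.erase a), F (a :: l) := by
  rw [sum_sigma']
  symm
  refine sum_bij (fun p _ => p.1 :: p.2) (fun p hp => cons_mem_words.2 (mem_sigma.1 hp)) ?_ ?_
    fun _ _ => rfl
  · rintro ⟨a, l⟩ _ ⟨b, l'⟩ _ h
    obtain ⟨rfl, rfl⟩ := List.cons.inj h
    rfl
  · rintro (_ | ⟨a, l⟩) hl
    · simp [← (mem_words.1 hl).2] at hX
    · exact ⟨⟨a, l⟩, mem_sigma.2 (cons_mem_words.1 hl), rfl⟩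

lemma sum_perm_ofFn {M : Type*} [AddCommMonoid M] {n : ℕ} (f : Fin n ↪ α)
    (F : List α → M) :
    ∑ σ : Equiv.Perm (Fin n), F (List.ofFn fun i => f (σ i)) = ∑ l ∈ words (univ.map f), F l := by
  refine sum_bij (fun σ _ => List.ofFn fun i => f (σ i)) (fun σ _ => ?_) (fun σ _ τ _ h => ?_)
    (fun l hl => ?_) fun _ _ => rfl
  · refine mem_words.2 ⟨List.nodup_ofFn.2 (f.injective.comp σ.injective), ?_⟩
    ext a
    simp only [List.mem_toFinset, List.mem_ofFn, mem_map, mem_univ, true_and]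
    exact σ.exists_congr_left.trans (by simp)
  · exact Equiv.ext fun i => f.injective (congrFun (List.ofFn_injective h) i)
  · have hlen : l.length = n := by
      rw [length_of_mem_words hl, card_map, card_univ, Fintype.card_fin]
    subst hlen
    have hletter (i : Fin l.length) : ∃ j, f j = l.get i := by
      have : l.get i ∈ l.toFinset := by simp
      rw [(mem_words.1 hl).2] at this
      simpa using this
    choose g hg using hletter
    have hinj : Function.Injective g := fun a b h =>
      List.nodup_iff_injective_get.1 (mem_words.1 hl).1 (by rw [← hg a, ← hg b, h])
    exact ⟨Equiv.ofBijective g (Finite.injective_iff_bijective.1 hinj), mem_univ _, by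
      simp only [Equiv.ofBijective_apply, hg, List.ofFn_get]⟩

lemma countP_eq_card_filter {X : Finset α} {l : List α} (hl : l ∈ words X) (p : α → Prop)
    [DecidablePred p] :
    l.countP (p ·) = #(X.filter p) := by
  obtain ⟨hnodup, rfl⟩ := mem_words.1 hl
  rw [List.countP_eq_length_filter, ← List.toFinset_card_of_nodup (hnodup.filter _),
    List.toFinset_filter]
  simp only [decide_eq_true_eq]

lemma filter_erase_of_not (X : Finset α) {p : α → Prop} {a : α} (ha : ¬p a) :
    (X.erase a).filter p = X.filter p := by
  rw [filter_erase, erase_eq_of_notMem fun h => ha (mem_filter.1 h).2]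

lemma toFinset_drop {l : List α} (hl : l.Nodup) (p : ℕ) :
    (l.drop p).toFinset = l.toFinset \ (l.take p).toFinset := by
  have hdisj : Disjoint (l.take p).toFinset (l.drop p).toFinset :=
    List.disjoint_toFinset_iff_disjoint.2 (List.disjoint_take_drop hl le_rfl)
  rw [← union_sdiff_cancel_left hdisj, ← List.toFinset_append, List.take_append_drop]

variable [LinearOrder α]

lemma sum_card_filter_lt {M : Type*} [AddCommMonoid M] (X : Finset α) (f : ℕ → M) :
    ∑ a ∈ X, f #(X.filter (· < a)) = ∑ i ∈ range #X, f i := by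
  induction X using Finset.induction_on_max with
  | empty => simp
  | insert a s ha ih =>
    have hnotMem : a ∉ s := fun h => lt_irrefl _ (ha a h)
    rw [sum_insert hnotMem, card_insert_of_notMem hnotMem, sum_range_succ, ← ih, add_comm]
    congr 1
    · refine sum_congr rfl fun b hb => ?_
      rw [filter_insert, if_neg (ha b hb).not_gt]
    · rw [filter_insert, if_neg (lt_irrefl a), filter_true_of_mem ha]

lemma sum_card_filter_gt {M : Type*} [AddCommMonoid M] (X : Finset α) (f : ℕ → M) :
    ∑ a ∈ X, f #(X.filter (a < ·)) = ∑ i ∈ range #X, f i :=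
  sum_card_filter_lt (α := αᵒᵈ) X f

/-- The number of inversions of a word. -/
def inversions : List α → ℕ
  | [] => 0
  | a :: l => l.countP (· < a) + inversions l

/-- The major index of the reversal of a word. -/
def revMaj : List α → ℕ
  | [] => 0
  | [_] => 0
  | b :: a :: l => (if b < a then l.length + 1 else 0) + revMaj (a :: l)

variable {K : Type*} [CommRing K] (q : K)

lemma qFactorial_succ (n : ℕ) :
    qFactorial q (n + 1) = qFactorial q n * ∑ i ∈ range (n + 1), q ^ i :=
  prod_range_succ _ _

theorem sum_pow_inversions (X : Finset α) :
    ∑ l ∈ words X, q ^ inversions l = qFactorial q #X := by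
  induction hn : #X generalizing X with
  | zero => simp [card_eq_zero.1 hn, inversions, qFactorial]
  | succ n ih =>
    have hfirst : ∀ a ∈ X, ∑ l ∈ words (X.erase a), q ^ inversions (a :: l)
        = qFactorial q n * q ^ #(X.filter (· < a)) := by
      intro a ha
      rw [← ih (X.erase a) (by rw [card_erase_of_mem ha, hn, Nat.add_sub_cancel]), sum_mul]
      refine sum_congr rfl fun l hl => ?_
      rw [inversions, pow_add, countP_eq_card_filter hl,
        filter_erase_of_not X (p := (· < a)) (lt_irrefl a), mul_comm]
    rw [sum_words_eq_sum_cons (card_pos.1 (by omega)), sum_congr rfl hfirst, ← mul_sum,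
      sum_card_filter_lt X (q ^ ·), hn, qFactorial_succ]

lemma sum_pow_revMaj_rank (Y : Finset α) (b : α) :
    ∑ a ∈ Y, q ^ ((if b < a then #Y else 0) + #(Y.filter (a < ·)))
      = q ^ #(Y.filter (b < ·)) * ∑ i ∈ range #Y, q ^ i := by
  set r := #(Y.filter (b < ·))
  have habove : ∑ a ∈ Y with b < a, q ^ ((if b < a then #Y else 0) + #(Y.filter (a < ·)))
      = ∑ i ∈ range r, q ^ (#Y + i) := by
    rw [← sum_card_filter_gt (Y.filter (b < ·)) fun i => q ^ (#Y + i)]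
    refine sum_congr rfl fun a ha => ?_
    have hba := (mem_filter.1 ha).2
    rw [if_pos hba, filter_filter]
    simp only [and_iff_right_of_imp hba.trans]
  have hbelow : ∑ a ∈ Y with ¬b < a, q ^ ((if b < a then #Y else 0) + #(Y.filter (a < ·)))
      = ∑ i ∈ range #(Y.filter (¬b < ·)), q ^ (r + i) := by
    rw [← sum_card_filter_gt (Y.filter (¬b < ·)) fun i => q ^ (r + i)]
    refine sum_congr rfl fun a ha => ?_
    have hba := (mem_filter.1 ha).2
    rw [if_neg hba, zero_add, ← card_filter_add_card_filter_not (s := Y.filter (a < ·)) (b < ·),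
      filter_filter, filter_filter, filter_filter]
    simp only [and_comm (a := a < _), and_iff_left_of_imp (not_lt.1 hba).trans_lt, r]
  rw [← sum_filter_add_sum_filter_not Y (b < ·), habove, hbelow,
    ← card_filter_add_card_filter_not (s := Y) (b < ·), add_comm (#(Y.filter (b < ·))),
    sum_range_add, mul_add, mul_sum, mul_sum, add_comm]
  simp only [← pow_add, r, add_comm, add_left_comm]

theorem sum_pow_revMaj_cons (Y : Finset α) (b : α) :
    ∑ l ∈ words Y, q ^ revMaj (b :: l) = q ^ #(Y.filter (b < ·)) * qFactorial q #Y := by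
  induction hn : #Y generalizing Y b with
  | zero => simp [card_eq_zero.1 hn, revMaj, qFactorial]
  | succ n ih =>
    have hfirst : ∀ a ∈ Y, ∑ l ∈ words (Y.erase a), q ^ revMaj (b :: a :: l)
        = q ^ ((if b < a then #Y else 0) + #(Y.filter (a < ·))) * qFactorial q n := by
      intro a ha
      have hcard : #(Y.erase a) = n := by rw [card_erase_of_mem ha, hn, Nat.add_sub_cancel]
      have hrec := ih (Y.erase a) a hcard
      rw [filter_erase_of_not Y (lt_irrefl a)] at hrec
      rw [pow_add, mul_assoc, ← hrec, mul_sum]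
      refine sum_congr rfl fun l hl => ?_
      rw [revMaj, pow_add, length_of_mem_words hl, hcard, hn]
    rw [sum_words_eq_sum_cons (card_pos.1 (by omega)), sum_congr rfl hfirst, ← sum_mul,
      sum_pow_revMaj_rank, hn, qFactorial_succ]
    ring

theorem sum_pow_revMaj (X : Finset α) : ∑ l ∈ words X, q ^ revMaj l = qFactorial q #X := by
  rcases X.eq_empty_or_nonempty with rfl | hX
  · simp [revMaj, qFactorial]
  obtain ⟨n, hn⟩ := Nat.exists_eq_add_one_of_ne_zero (card_ne_zero.2 hX)
  have hfirst : ∀ a ∈ X, ∑ l ∈ words (X.erase a), q ^ revMaj (a :: l)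
      = qFactorial q n * q ^ #(X.filter (a < ·)) := by
    intro a ha
    rw [sum_pow_revMaj_cons, filter_erase_of_not X (lt_irrefl a), card_erase_of_mem ha, hn,
      Nat.add_sub_cancel, mul_comm]
  rw [sum_words_eq_sum_cons hX, sum_congr rfl hfirst, ← mul_sum, sum_card_filter_gt X (q ^ ·), hn,
    qFactorial_succ]

lemma revMaj_reverse_map_range (x : ℕ → ℤ) :
    ∀ n : ℕ, revMaj ((List.range n).map x).reverse = majStat n x
  | 0 => by simp [revMaj, majStat]
  | 1 => by simp [revMaj, majStat]
  | n + 2 => by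
    rw [majStat_succ, ← revMaj_reverse_map_range x (n + 1), add_comm (revMaj _)]
    simp only [List.range_succ, List.map_append, List.map_cons, List.map_nil, List.reverse_append,
      List.reverse_cons, List.reverse_nil, List.nil_append, List.cons_append, revMaj,
      List.length_reverse, List.length_map, List.length_range]

theorem sum_pow_majStat_eq_qFactorial (n : ℕ) :
    ∑ σ : Equiv.Perm (Fin n), q ^ majStat n (pword n σ) = qFactorial q n := by
  let f : Fin n ↪ ℤ := ⟨fun i => (i : ℤ) + 1, fun a b h => Fin.ext (by simp only at h; omega)⟩
  calc
    _ = ∑ σ : Equiv.Perm (Fin n), q ^ revMaj (List.ofFn fun i => f (σ (Fin.rev i))) := by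
        refine sum_congr rfl fun σ _ => ?_
        rw [← revMaj_reverse_map_range]
        congr 2
        refine List.ext_getElem (by simp) fun i h _ => ?_
        have hi : i < n := by simpa using h
        simp only [List.getElem_reverse, List.getElem_map, List.getElem_range, List.length_map,
          List.length_range, List.getElem_ofFn, pword, f, (by omega : n - 1 - i < n), dite_true,
          Fin.rev]
        simp only [Nat.sub_sub, add_comm 1 i]
        rfl
    _ = ∑ σ : Equiv.Perm (Fin n), q ^ revMaj (List.ofFn fun i => f (σ i)) :=
        Equiv.sum_comp (Equiv.mulRight Fin.revPerm)
          fun σ => q ^ revMaj (List.ofFn fun i => f (σ i))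
    _ = qFactorial q n := by
        rw [sum_perm_ofFn f (q ^ revMaj ·),
          sum_pow_revMaj, card_map, card_univ, Fintype.card_fin]

end Words

section PixedFactorization

variable {α : Type*} [LinearOrder α]

/-- The position (counted from 1) of the leftmost trough of a word, the end of the word counting as
an ascent; it is `0` for the empty word. A word with distinct letters is a desarrangement if and
only if this position is even. -/
def firstTrough : List α → ℕ
  | [] => 0
  | [_] => 1
  | a :: b :: l => if b < a then firstTrough (b :: l) + 1 else 1

/-- The number of letters preceding the longest right factor that is a desarrangement. -/
def pixLength : List α → ℕ
  | [] => 0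
  | a :: l => if Even (firstTrough (a :: l)) then 0 else pixLength l + 1

lemma even_firstTrough_drop_pixLength : ∀ l : List α, Even (firstTrough (l.drop (pixLength l)))
  | [] => by simp [firstTrough, pixLength]
  | a :: l => by
    rw [pixLength]
    split_ifs with h
    · exact h
    · exact even_firstTrough_drop_pixLength l

lemma pixLength_le_length : ∀ l : List α, pixLength l ≤ l.length
  | [] => le_rfl
  | a :: l => by
    rw [pixLength, List.length_cons]
    have := pixLength_le_length l
    split_ifs <;> omega

lemma pixLength_le_of_even_firstTrough_drop :
    ∀ {l : List α} {p : ℕ}, Even (firstTrough (l.drop p)) → pixLength l ≤ p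
  | [], _, _ => by simp [pixLength]
  | a :: l, p, h => by
    rw [pixLength]
    split_ifs with ha
    · exact p.zero_le
    · cases p with
      | zero => exact absurd h ha
      | succ p => exact Nat.succ_le_succ (pixLength_le_of_even_firstTrough_drop h)

lemma isChain_take_pixLength :
    ∀ {l : List α}, l.Nodup → (l.take (pixLength l)).IsChain (· < ·)
  | [], _ => by simp
  | [a], _ => by simp [pixLength, firstTrough]
  | a :: b :: l, h => by
    have ih := isChain_take_pixLength h.of_cons
    rw [pixLength]
    split_ifs with hab
    · simp
    rw [List.take_succ_cons]
    rw [pixLength] at ih ⊢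
    split_ifs at ih ⊢ with hb
    · simp
    rw [List.take_succ_cons] at ih ⊢
    refine List.isChain_cons_cons.2 ⟨?_, ih⟩
    by_contra hlt
    have hne : b ≠ a := by
      rintro rfl
      simp at h
    rw [firstTrough, if_pos (lt_of_le_of_ne (not_lt.1 hlt) hne), Nat.even_add_one, not_not] at hab
    exact hb hab

lemma not_even_firstTrough_cons {a : α} {v : List α} (hv : Even (firstTrough v)) :
    ¬Even (firstTrough (a :: v)) := by
  cases v with
  | nil => simp [firstTrough]
  | cons b v =>
    rw [firstTrough]
    split_ifs
    · rwa [Nat.even_add_one, not_not]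
    · simp

lemma pixLength_of_even_firstTrough {v : List α} (hv : Even (firstTrough v)) : pixLength v = 0 := by
  cases v with
  | nil => rfl
  | cons b v => rw [pixLength, if_pos hv]

lemma pixLength_append :
    ∀ {s v : List α}, s.IsChain (· < ·) → Even (firstTrough v) → pixLength (s ++ v) = s.length
  | [], _, _, hv => pixLength_of_even_firstTrough hv
  | [a], v, _, hv => by
    rw [List.singleton_append, pixLength, if_neg (not_even_firstTrough_cons hv),
      pixLength_of_even_firstTrough hv, List.length_singleton]
  | a :: b :: s, v, hs, hv => by
    rw [List.isChain_cons_cons] at hs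
    have ih := pixLength_append hs.2 hv
    simp only [List.cons_append] at ih ⊢
    have hodd : ¬Even (firstTrough (a :: b :: (s ++ v))) := by
      rw [firstTrough, if_neg hs.1.not_gt]
      exact Nat.not_even_one
    rw [pixLength, if_neg hodd, ih, List.length_cons (as := b :: s)]

lemma inversions_append : ∀ {s : List α} (v : List α), s.Pairwise (· < ·) →
    inversions (s ++ v) = (s.map fun a => v.countP (· < a)).sum + inversions v
  | [], v, _ => by simp
  | a :: s, v, h => by
    rw [List.pairwise_cons] at h
    have hs : s.countP (· < a) = 0 := by
      rw [List.countP_eq_zero]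
      intro b hb
      simpa using (h.1 b hb).le
    rw [List.cons_append, inversions, inversions_append v h.2, List.countP_append, hs, zero_add,
      List.map_cons, List.sum_cons, add_assoc]

/-- The number of inversions between the letters of `L` and the letters of `M` in a word where the
former precede the latter. -/
def crossInversions (L M : Finset α) : ℕ := ∑ a ∈ L, #(M.filter (· < a))

/-- The desarrangements with letter set `X`. -/
def desarrangements (X : Finset α) : Finset (List α) :=
  (words X).filter fun l => Even (firstTrough l)

lemma drop_pixLength_mem_desarrangements {X : Finset α} {l : List α} (hl : l ∈ words X) :
    l.drop (pixLength l) ∈ desarrangements (X \ (l.take (pixLength l)).toFinset) := by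
  obtain ⟨hnodup, rfl⟩ := mem_words.1 hl
  exact mem_filter.2 ⟨mem_words.2 ⟨hnodup.sublist (List.drop_sublist _ _), toFinset_drop hnodup _⟩,
    even_firstTrough_drop_pixLength l⟩

lemma inversions_eq_crossInversions_add {X : Finset α} {l : List α} (hl : l ∈ words X) :
    inversions l = crossInversions (l.take (pixLength l)).toFinset
      (X \ (l.take (pixLength l)).toFinset) + inversions (l.drop (pixLength l)) := by
  have hnodup := (mem_words.1 hl).1
  have hdrop := (mem_filter.1 (drop_pixLength_mem_desarrangements hl)).1
  conv_lhs => rw [← List.take_append_drop (pixLength l) l]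
  rw [inversions_append _ (isChain_take_pixLength hnodup).pairwise, crossInversions,
    List.sum_toFinset _ (hnodup.sublist (List.take_sublist _ _))]
  congr 3
  exact funext fun a => countP_eq_card_filter hdrop (· < a)

/-- A word is determined by the set of letters of its pixed prefix, which is increasing, together
with the remaining desarrangement. -/
theorem sum_words_eq_sum_powerset {M : Type*} [AddCommMonoid M] (X : Finset α)
    (F : Finset α → List α → M) :
    ∑ l ∈ words X, F (l.take (pixLength l)).toFinset (l.drop (pixLength l))
      = ∑ L ∈ X.powerset, ∑ v ∈ desarrangements (X \ L), F L v := by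
  rw [sum_sigma']
  refine sum_bij (fun l _ => ⟨(l.take (pixLength l)).toFinset, l.drop (pixLength l)⟩)
    (fun l hl => mem_sigma.2 ⟨mem_powerset.2 ?_, drop_pixLength_mem_desarrangements hl⟩)
    (fun l hl l' hl' h => ?_) (fun p hp => ?_) fun _ _ => rfl
  · rw [← (mem_words.1 hl).2]
    exact fun a ha => List.mem_toFinset.2 (List.mem_of_mem_take (List.mem_toFinset.1 ha))
  · obtain ⟨htake, hdrop⟩ := Sigma.mk.inj h
    have hperm := List.perm_of_nodup_nodup_toFinset_eq
      ((mem_words.1 hl).1.sublist (List.take_sublist _ _))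
      ((mem_words.1 hl').1.sublist (List.take_sublist _ _)) htake
    rw [← List.take_append_drop (pixLength l) l, ← List.take_append_drop (pixLength l') l',
      eq_of_heq hdrop]
    congr 1
    exact hperm.eq_of_pairwise (fun a b _ _ hab hba => absurd hab hba.not_gt)
      (isChain_take_pixLength (mem_words.1 hl).1).pairwise
      (isChain_take_pixLength (mem_words.1 hl').1).pairwise
  · obtain ⟨L, v⟩ := p
    obtain ⟨hL, hv⟩ : L ∈ X.powerset ∧ v ∈ desarrangements (X \ L) := mem_sigma.1 hp
    obtain ⟨hwords, heven⟩ := mem_filter.1 hv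
    obtain ⟨hnodup, hletters⟩ := mem_words.1 hwords
    obtain ⟨s, hs, rfl⟩ : ∃ s : List α, s.SortedLT ∧ s.toFinset = L :=
      ⟨_, sortedLT_sort L, by simp⟩
    have hlen : pixLength (s ++ v) = s.length := pixLength_append hs.isChain heven
    refine ⟨s ++ v, mem_words.2 ⟨List.nodup_append'.2 ⟨hs.nodup, hnodup, ?_⟩, ?_⟩, ?_⟩
    · rw [← List.disjoint_toFinset_iff_disjoint, hletters]
      exact disjoint_sdiff
    · rw [List.toFinset_append, hletters, union_sdiff_of_subset (mem_powerset.1 hL)]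
    · simp [hlen]

variable {K : Type*} [CommRing K] (q : K)

theorem sum_pow_crossInversions (X : Finset α) (g : ℕ → ℕ → K) :
    ∑ L ∈ X.powerset, q ^ crossInversions L (X \ L) * g #L #(X \ L)
      = ∑ p ∈ antidiagonal #X, gaussBinom q p.1 p.2 * g p.1 p.2 := by
  induction X using Finset.induction_on_max generalizing g with
  | empty => simp [crossInversions]
  | insert a s ha ih =>
    have has : a ∉ s := fun h => lt_irrefl _ (ha a h)
    rw [sum_powerset_insert has, card_insert_of_notMem has, sum_antidiagonal_gaussBinom_succ,
      ← ih fun i j => g i (j + 1) + q ^ j * g (i + 1) j, ← sum_add_distrib]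
    refine sum_congr rfl fun L hL => ?_
    have hLs := mem_powerset.1 hL
    have haL : a ∉ L := fun h => has (hLs h)
    have hout : crossInversions L (insert a s \ L) = crossInversions L (s \ L) := by
      refine sum_congr rfl fun b hb => ?_
      rw [insert_sdiff_of_notMem _ haL, filter_insert, if_neg (ha b (hLs hb)).not_gt]
    have hsdiff : insert a s \ insert a L = s \ L := by
      rw [insert_sdiff_insert, sdiff_insert_of_notMem has]
    have hin : crossInversions (insert a L) (insert a s \ insert a L)
        = #(s \ L) + crossInversions L (s \ L) := by
      rw [hsdiff, crossInversions, sum_insert haL,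
        filter_true_of_mem fun b hb => ha b (mem_sdiff.1 hb).1, crossInversions]
    rw [hout, hin, hsdiff, insert_sdiff_of_notMem _ haL, card_insert_of_notMem haL,
      card_insert_of_notMem fun h => has (mem_sdiff.1 h).1, pow_add]
    ring

lemma sum_pow_inversions_mul_eq_sum_powerset (X : Finset α) (f : Finset α → K) :
    ∑ l ∈ words X, q ^ inversions l * f (l.take (pixLength l)).toFinset = ∑ L ∈ X.powerset,
      q ^ crossInversions L (X \ L) * f L * ∑ v ∈ desarrangements (X \ L), q ^ inversions v := by
  simp only [mul_sum]
  rw [← sum_words_eq_sum_powerset X fun L v =>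
    q ^ crossInversions L (X \ L) * f L * q ^ inversions v]
  refine sum_congr rfl fun l hl => ?_
  rw [inversions_eq_crossInversions_add hl, pow_add, mul_right_comm]

lemma qFactorial_eq_sum_powerset (X : Finset α) :
    qFactorial q #X
      = ∑ L ∈ X.powerset, q ^ crossInversions L (X \ L) * Dmaj q #(X \ L) := by
  rw [← sum_pow_majStat_eq_qFactorial, sum_pow_majStat_eq_sum_gaussBinom_mul_Dmaj,
    sum_pow_crossInversions q X fun _ j => Dmaj q j, ← Nat.sum_antidiagonal_swap]
  exact sum_congr rfl fun p _ => by rw [Prod.fst_swap, Prod.snd_swap, gaussBinom_comm]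

/-- The theorem of Désarménien and Wachs, for desarrangements without passing to inverses: both
sides satisfy the same triangular recursion over the letter sets of pixed prefixes. -/
theorem sum_pow_inversions_desarrangements (X : Finset α) :
    ∑ v ∈ desarrangements X, q ^ inversions v = Dmaj q #X := by
  induction X using Finset.strongInduction with
  | H X ih =>
    have hsum := sum_pow_inversions_mul_eq_sum_powerset q X fun _ => 1
    simp only [mul_one] at hsum
    rw [sum_pow_inversions, qFactorial_eq_sum_powerset, eq_comm] at hsum
    have hrest : ∀ L ∈ X.powerset.erase ∅,
        q ^ crossInversions L (X \ L) * ∑ v ∈ desarrangements (X \ L), q ^ inversions v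
          = q ^ crossInversions L (X \ L) * Dmaj q #(X \ L) := by
      intro L hL
      obtain ⟨hne, hLX⟩ := mem_erase.1 hL
      rw [ih _ (sdiff_ssubset (mem_powerset.1 hLX) (nonempty_iff_ne_empty.2 hne))]
    rw [← add_sum_erase _ _ (empty_mem_powerset X), ← add_sum_erase _ _ (empty_mem_powerset X),
      sum_congr rfl hrest] at hsum
    simpa [crossInversions] using add_right_cancel hsum

theorem sum_pow_inversions_mul (X : Finset α) (f : Finset α → K) :
    ∑ l ∈ words X, q ^ inversions l * f (l.take (pixLength l)).toFinset
      = ∑ L ∈ X.powerset, q ^ crossInversions L (X \ L) * f L * Dmaj q #(X \ L) := by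
  rw [sum_pow_inversions_mul_eq_sum_powerset]
  simp only [sum_pow_inversions_desarrangements]

end PixedFactorization

section TwoBlocks

variable {α : Type*} (p : α → Prop) [DecidablePred p]

lemma sum_powerset_filter {M : Type*} [AddCommMonoid M] (X : Finset α)
    (F : Finset α → Finset α → M) :
    ∑ L ∈ X.powerset, F (L.filter p) (L.filter (¬p ·))
      = ∑ A ∈ (X.filter p).powerset, ∑ B ∈ (X.filter (¬p ·)).powerset, F A B := by
  rw [← sum_product']
  refine sum_bij' (fun L _ => (L.filter p, L.filter (¬p ·))) (fun s _ => s.1 ∪ s.2)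
    (fun L hL => ?_) (fun s hs => ?_) (fun L _ => filter_union_filter_not_eq p L)
    (fun s hs => ?_) fun _ _ => rfl
  · have hLX := mem_powerset.1 hL
    exact mem_product.2 ⟨mem_powerset.2 (filter_subset_filter p hLX),
      mem_powerset.2 (filter_subset_filter (¬p ·) hLX)⟩
  · have hs := mem_product.1 hs
    exact mem_powerset.2 (union_subset ((mem_powerset.1 hs.1).trans (filter_subset _ _))
      ((mem_powerset.1 hs.2).trans (filter_subset _ _)))
  · obtain ⟨hA, hB⟩ := mem_product.1 hs
    have hA' : ∀ a ∈ s.1, p a := fun a ha => (mem_filter.1 (mem_powerset.1 hA ha)).2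
    have hB' : ∀ b ∈ s.2, ¬p b := fun b hb => (mem_filter.1 (mem_powerset.1 hB hb)).2
    refine Prod.ext ?_ ?_
    · simp only [filter_union]
      rw [filter_true_of_mem hA', filter_false_of_mem hB', union_empty]
    · simp only [filter_union]
      rw [filter_false_of_mem fun a ha => not_not.2 (hA' a ha), filter_true_of_mem hB',
        empty_union]

lemma filter_sdiff_filter (X L : Finset α) : X.filter p \ L.filter p = (X \ L).filter p := by
  ext a
  simp only [mem_sdiff, mem_filter]
  tauto

variable {p} [LinearOrder α]

lemma crossInversions_eq_add_of_lt {L M : Finset α}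
    (hLM : ∀ a ∈ L, ∀ b ∈ M, p a → ¬p b → a < b) (hML : ∀ a ∈ L, ∀ b ∈ M, p b → ¬p a → b < a) :
    crossInversions L M = crossInversions (L.filter p) (M.filter p)
      + (crossInversions (L.filter (¬p ·)) (M.filter (¬p ·))
        + #(L.filter (¬p ·)) * #(M.filter p)) := by
  rw [crossInversions, ← sum_filter_add_sum_filter_not L p, ← smul_eq_mul, ← sum_const,
    crossInversions, crossInversions, ← sum_add_distrib]
  congr 1
  · refine sum_congr rfl fun a ha => ?_
    obtain ⟨haL, hpa⟩ := mem_filter.1 ha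
    rw [filter_filter]
    refine congrArg card (filter_congr fun b hb => ⟨fun hba => ⟨?_, hba⟩, And.right⟩)
    by_contra hpb
    exact hba.not_gt (hLM a haL b hb hpa hpb)
  · refine sum_congr rfl fun a ha => ?_
    obtain ⟨haL, hpa⟩ := mem_filter.1 ha
    rw [← card_filter_add_card_filter_not (s := M.filter (· < a)) p, filter_filter, filter_filter,
      filter_filter, add_comm]
    congr 2
    · exact filter_congr fun b _ => and_comm
    · exact filter_congr fun b hb => ⟨And.right, fun hpb => ⟨hML a haL b hb hpb hpa, hpb⟩⟩

variable {K : Type*} [CommRing K] (q : K)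

lemma sum_pow_crossInversions_filter {X : Finset α}
    (hX : ∀ a ∈ X, ∀ b ∈ X, p a → ¬p b → a < b) (g : ℕ → ℕ → ℕ → ℕ → K) :
    ∑ L ∈ X.powerset, q ^ crossInversions L (X \ L) * g #(L.filter p) #((X \ L).filter p)
        #(L.filter (¬p ·)) #((X \ L).filter (¬p ·))
      = ∑ s ∈ antidiagonal #(X.filter p), gaussBinom q s.1 s.2 *
          ∑ t ∈ antidiagonal #(X.filter (¬p ·)), gaussBinom q t.1 t.2 *
            (q ^ (t.1 * s.2) * g s.1 s.2 t.1 t.2) := by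
  let U := X.filter p
  let V := X.filter (¬p ·)
  let F (A B : Finset α) : K := q ^ crossInversions A (U \ A) * (q ^ crossInversions B (V \ B) *
    (q ^ (#B * #(U \ A)) * g #A #(U \ A) #B #(V \ B)))
  let G (j k : ℕ) : K := ∑ t ∈ antidiagonal #V, gaussBinom q t.1 t.2 *
    (q ^ (t.1 * k) * g j k t.1 t.2)
  calc
    _ = ∑ L ∈ X.powerset, F (L.filter p) (L.filter (¬p ·)) := by
        refine sum_congr rfl fun L hL => ?_
        have hLX := mem_powerset.1 hL
        simp only [F, U, V, filter_sdiff_filter]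
        rw [crossInversions_eq_add_of_lt (p := p)
          (fun a ha b hb => hX a (hLX ha) b (mem_sdiff.1 hb).1)
          (fun a ha b hb => hX b (mem_sdiff.1 hb).1 a (hLX ha)), pow_add, pow_add]
        ring
    _ = ∑ A ∈ U.powerset, ∑ B ∈ V.powerset, F A B := sum_powerset_filter p X F
    _ = ∑ A ∈ U.powerset, q ^ crossInversions A (U \ A) * G #A #(U \ A) := by
        simp only [F, ← mul_sum]
        exact sum_congr rfl fun A _ => congrArg _ (sum_pow_crossInversions q V
          fun i l => q ^ (i * #(U \ A)) * g #A #(U \ A) i l)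
    _ = ∑ s ∈ antidiagonal #U, gaussBinom q s.1 s.2 * G s.1 s.2 := sum_pow_crossInversions q U G

theorem sum_pow_inversions_mul_countP {X : Finset α}
    (hX : ∀ a ∈ X, ∀ b ∈ X, p a → ¬p b → a < b) (g : ℕ → ℕ → K) :
    ∑ l ∈ words X, q ^ inversions l *
        g ((l.take (pixLength l)).countP (p ·)) ((l.take (pixLength l)).countP (¬p ·))
      = ∑ s ∈ antidiagonal #(X.filter p), gaussBinom q s.1 s.2 *
          ∑ t ∈ antidiagonal #(X.filter (¬p ·)), gaussBinom q t.1 t.2 *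
            (q ^ (t.1 * s.2) * (g s.1 t.1 * Dmaj q (s.2 + t.2))) := by
  let f (L : Finset α) : K := g #(L.filter p) #(L.filter (¬p ·))
  calc
    _ = ∑ l ∈ words X, q ^ inversions l * f (l.take (pixLength l)).toFinset := by
        refine sum_congr rfl fun l hl => ?_
        have htake : l.take (pixLength l) ∈ words (l.take (pixLength l)).toFinset :=
          mem_words.2 ⟨(mem_words.1 hl).1.sublist (List.take_sublist _ _), rfl⟩
        rw [countP_eq_card_filter htake p, countP_eq_card_filter htake (¬p ·)]
    _ = ∑ L ∈ X.powerset, q ^ crossInversions L (X \ L) * f L * Dmaj q #(X \ L) :=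
        sum_pow_inversions_mul q X f
    _ = _ := by
        rw [← sum_pow_crossInversions_filter q hX fun j k i l => g j i * Dmaj q (k + l)]
        simp only [card_filter_add_card_filter_not, f, mul_assoc]

end TwoBlocks

section WordStatistics

lemma map_range_succ (n : ℕ) (x : ℕ → ℤ) :
    (List.range (n + 1)).map x = x 0 :: (List.range n).map fun i => x (i + 1) := by
  rw [List.range_succ_eq_map, List.map_cons, List.map_map]
  rfl

lemma countP_map_range (n : ℕ) (x : ℕ → ℤ) (p : ℤ → Bool) :
    ((List.range n).map x).countP p = #((range n).filter fun i => p (x i)) := by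
  rw [List.countP_map, card_def, filter_val, ← Multiset.countP_eq_card_filter,
    range_val, Multiset.range, Multiset.coe_countP]
  simp only [Bool.decide_eq_true, Function.comp_def]

lemma invStat_eq_inversions (n : ℕ) (x : ℕ → ℤ) :
    invStat n x = inversions ((List.range n).map x) := by
  induction n generalizing x with
  | zero => rfl
  | succ n ih =>
    rw [map_range_succ, inversions, ← ih, countP_map_range]
    simp only [invStat, card_filter, sum_product, sum_range_succ' _ n]
    simp [add_comm]

lemma firstTrough_cons_ne_zero (a : ℤ) (l : List ℤ) : firstTrough (a :: l) ≠ 0 := by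
  cases l with
  | nil => exact one_ne_zero
  | cons b l =>
    rw [firstTrough]
    split_ifs <;> omega

lemma firstTrough_map_range_eq_succ_iff :
    ∀ (n t : ℕ) (x : ℕ → ℤ), (∀ i < n, x i ≠ x (i + 1)) →
      (firstTrough ((List.range (n + 1)).map x) = t + 1 ↔
        t ≤ n ∧ (∀ i < t, x (i + 1) < x i) ∧ (t = n ∨ x t < x (t + 1)))
  | 0, t, x, _ => by
    simp only [zero_add, List.range_one, List.map_cons, List.map_nil, firstTrough]
    constructor
    · intro h
      exact ⟨by omega, by omega, by omega⟩
    · rintro ⟨h, -⟩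
      omega
  | n + 1, t, x, hx => by
    have ih (s : ℕ) := firstTrough_map_range_eq_succ_iff n s (fun i => x (i + 1))
      fun i hi => hx (i + 1) (by omega)
    rw [map_range_succ] at ih
    rw [map_range_succ, map_range_succ, firstTrough]
    split_ifs with hdesc
    · cases t with
      | zero =>
        refine ⟨fun h => absurd (Nat.succ.inj h) (firstTrough_cons_ne_zero _ _), fun h => ?_⟩
        exact absurd (h.2.2.resolve_left (Nat.succ_ne_zero n).symm) hdesc.not_gt
      | succ t =>
        rw [add_left_inj, ih, Nat.add_le_add_iff_right, Nat.forall_lt_succ_left, add_left_inj]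
        simp only [zero_add] at hdesc ⊢
        simp only [hdesc, true_and]
    · cases t with
      | zero =>
        have hasc := lt_of_le_of_ne (not_lt.1 hdesc) (hx 0 n.succ_pos)
        exact ⟨fun _ => ⟨Nat.zero_le _, by simp, Or.inr hasc⟩, fun _ => rfl⟩
      | succ t => exact ⟨fun h => by omega, fun h => absurd (h.2.1 0 t.succ_pos) hdesc⟩

theorem isDesar_iff_even_firstTrough (m : ℕ) (x : ℕ → ℤ) (hx : ∀ i, i + 1 < m → x i ≠ x (i + 1)) :
    IsDesar m x ↔ Even (firstTrough ((List.range m).map x)) := by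
  cases m with
  | zero => simp [IsDesar, firstTrough]
  | succ n =>
    have hspec (k : ℕ) : IsDesarAt (n + 1) (k + 1) x ↔
        firstTrough ((List.range (n + 1)).map x) = 2 * k + 1 + 1 := by
      rw [firstTrough_map_range_eq_succ_iff n (2 * k + 1) x fun i hi => hx i (by omega)]
      simp only [IsDesarAt, Nat.mul_add_one, Nat.add_lt_add_iff_right, Nat.le_add_left, true_and]
      exact and_congr (by omega) (and_congr_right' (or_congr (by omega) Iff.rfl))
    constructor
    · rintro (h | ⟨_ | k, hk⟩)
      · exact absurd h n.succ_ne_zero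
      · exact absurd hk.1 (by omega)
      · exact ⟨k + 1, ((hspec k).1 hk).trans (by omega)⟩
    · rintro ⟨_ | k, hk⟩
      · rw [map_range_succ] at hk
        exact absurd hk (firstTrough_cons_ne_zero _ _)
      · exact Or.inr ⟨k + 1, (hspec k).2 (hk.trans (by omega))⟩

lemma drop_map_range {n m : ℕ} (h : m ≤ n) (x : ℕ → ℤ) :
    ((List.range n).map x).drop (n - m) = (List.range m).map fun i => x (n - m + i) :=
  List.ext_getElem (by simp; omega) fun i _ _ => by simp

theorem sub_dlen_eq_pixLength {n : ℕ} {x : ℕ → ℤ} (hx : ((List.range n).map x).Nodup) :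
    n - dlen n x = pixLength ((List.range n).map x) := by
  set l := (List.range n).map x with hl
  have hlen : pixLength l ≤ n := (pixLength_le_length l).trans_eq (by simp [hl])
  have hadj : ∀ i, i + 1 < n → x i ≠ x (i + 1) := fun i hi h => by
    have := List.inj_on_of_nodup_map hx (List.mem_range.2 (by omega)) (List.mem_range.2 hi) h
    omega
  have hset (m : ℕ) (hm : m ≤ n) :
      IsDesar m (fun i => x (n - m + i)) ↔ Even (firstTrough (l.drop (n - m))) := by
    rw [isDesar_iff_even_firstTrough, hl, drop_map_range hm]
    exact fun i hi => hadj (n - m + i) (by omega)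
  have hmax : IsGreatest {m | m ≤ n ∧ IsDesar m fun i => x (n - m + i)} (n - pixLength l) := by
    refine ⟨⟨Nat.sub_le _ _, (hset _ (Nat.sub_le _ _)).2 ?_⟩, fun m ⟨hm, hdesar⟩ => ?_⟩
    · rw [Nat.sub_sub_self hlen]
      exact even_firstTrough_drop_pixLength l
    · have := pixLength_le_of_even_firstTrough_drop ((hset m hm).1 hdesar)
      omega
  rw [dlen, hmax.csSup_eq, Nat.sub_sub_self hlen]

lemma card_filter_range_sub_dlen {n : ℕ} {x : ℕ → ℤ} (hx : ((List.range n).map x).Nodup)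
    (p : ℤ → Prop) [DecidablePred p] :
    #((range (n - dlen n x)).filter fun i => p (x i))
      = (((List.range n).map x).take (pixLength ((List.range n).map x))).countP (p ·) := by
  rw [← sub_dlen_eq_pixLength hx, ← List.map_take, List.take_range,
    Nat.min_eq_left (Nat.sub_le _ _), countP_map_range]
  simp only [decide_eq_true_eq]

end WordStatistics

section LetterSets

variable {α : Type*} [LinearOrder α] {K : Type*} [CommRing K] (q : K)

lemma sum_card_filter_lt_add_one {L X : Finset α} (hL : L ⊆ X) :
    ∑ a ∈ L, (#(X.filter (· < a)) + 1) = (#L + 1).choose 2 + crossInversions L (X \ L) := by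
  have hcard (a : α) :
      #(X.filter (· < a)) + 1 = (#(L.filter (· < a)) + 1) + #((X \ L).filter (· < a)) := by
    rw [add_right_comm, ← card_union_of_disjoint (disjoint_filter_filter disjoint_sdiff),
      ← filter_union, union_sdiff_of_subset hL]
  rw [sum_congr rfl fun a _ => hcard a, sum_add_distrib, sum_card_filter_lt L (· + 1),
    crossInversions, Nat.choose_two_right, ← sum_range_id, sum_range_succ', add_zero]

/-- For `g i j = z ^ i` this is the `q`-binomial theorem. -/
theorem sum_pow_sum_card_filter_lt_add_one (X : Finset α) (g : ℕ → ℕ → K) :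
    ∑ L ∈ X.powerset, q ^ (∑ a ∈ L, (#(X.filter (· < a)) + 1)) * g #L (#X - #L)
      = ∑ p ∈ antidiagonal #X, gaussBinom q p.1 p.2 * (q ^ (p.1 + 1).choose 2 * g p.1 p.2) := by
  rw [← sum_pow_crossInversions q X fun a b => q ^ (a + 1).choose 2 * g a b]
  refine sum_congr rfl fun L hL => ?_
  have hLX := mem_powerset.1 hL
  rw [sum_card_filter_lt_add_one hLX, pow_add, card_sdiff_of_subset hLX]
  ring1

end LetterSets

section Signs

variable {n : ℕ}

/-- The letter of value `v` in a signed permutation, negative exactly when `v ∈ L`; as in `sword`,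
the value `v : Fin n` stands for the letters `±(v + 1)`. -/
def signedLetter (L : Finset (Fin n)) : Fin n ↪ ℤ where
  toFun v := if v ∈ L then -((v : ℤ) + 1) else (v : ℤ) + 1
  inj' v w h := by
    beta_reduce at h
    ext
    split_ifs at h <;> omega

/-- The word of the signed permutation with absolute values `σ` and set `L` of negative values. -/
def signedWord (L : Finset (Fin n)) (σ : Equiv.Perm (Fin n)) : List ℤ :=
  List.ofFn fun i => signedLetter L (σ i)

lemma sum_signed_perm {M : Type*} [AddCommMonoid M]
    (F : Equiv.Perm (Fin n) × (Fin n → Bool) → M) :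
    ∑ w, F w = ∑ L : Finset (Fin n), ∑ σ : Equiv.Perm (Fin n),
      F (σ, fun i => decide (σ i ∈ L)) := by
  rw [Fintype.sum_prod_type, sum_comm (s := univ (α := Finset (Fin n)))]
  refine sum_congr rfl fun σ _ => ?_
  refine sum_nbij' (fun ε => univ.filter fun v => ε (σ.symm v)) (fun L i => decide (σ i ∈ L))
    ?_ ?_ ?_ ?_ ?_
  all_goals simp

variable (L : Finset (Fin n)) (σ : Equiv.Perm (Fin n))

lemma signedLetter_apply (v : Fin n) :
    signedLetter L v = if v ∈ L then -((v : ℤ) + 1) else (v : ℤ) + 1 :=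
  rfl

lemma signedLetter_neg_iff (v : Fin n) : signedLetter L v < 0 ↔ v ∈ L := by
  rw [signedLetter_apply]
  split_ifs with h <;> simp only [h, iff_true, iff_false] <;> omega

lemma signedLetter_pos_iff (v : Fin n) : 0 < signedLetter L v ↔ ¬signedLetter L v < 0 := by
  rw [signedLetter_apply]
  split_ifs <;> omega

lemma sword_decide_mem (i : Fin n) :
    sword n (σ, fun i => decide (σ i ∈ L)) i = signedLetter L (σ i) := by
  simp [sword, signedLetter_apply]

lemma map_range_sword :
    (List.range n).map (sword n (σ, fun i => decide (σ i ∈ L))) = signedWord L σ :=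
  List.ext_getElem (by simp [signedWord]) fun i hi _ => by
    simpa [signedWord] using sword_decide_mem L σ ⟨i, by simpa using hi⟩

lemma nodup_map_range_sword :
    ((List.range n).map (sword n (σ, fun i => decide (σ i ∈ L)))).Nodup := by
  rw [map_range_sword]
  exact List.nodup_ofFn.2 ((signedLetter L).injective.comp σ.injective)

lemma negStat_sword : negStat n (sword n (σ, fun i => decide (σ i ∈ L))) = #L := by
  simp only [negStat, card_filter, sum_range, sword_decide_mem, signedLetter_neg_iff]
  rw [Equiv.sum_comp σ fun v => if v ∈ L then 1 else 0]
  simp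

lemma lenStat_sword :
    lenStat n (sword n (σ, fun i => decide (σ i ∈ L)))
      = inversions (signedWord L σ) + ∑ v ∈ L, ((v : ℕ) + 1) := by
  have habs (v : Fin n) : (if signedLetter L v < 0 then (signedLetter L v).natAbs else 0)
      = if v ∈ L then (v : ℕ) + 1 else 0 := by
    simp only [signedLetter_neg_iff]
    refine ite_congr rfl (fun h => ?_) fun _ => rfl
    rw [signedLetter_apply, if_pos h]
    omega
  rw [lenStat, invStat_eq_inversions, map_range_sword, sum_range]
  simp only [sword_decide_mem, habs]
  rw [Equiv.sum_comp σ fun v => if v ∈ L then (v : ℕ) + 1 else 0]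
  simp

lemma pixMinus_sword :
    pixMinus n (sword n (σ, fun i => decide (σ i ∈ L)))
      = ((signedWord L σ).take (pixLength (signedWord L σ))).countP (· < 0) := by
  rw [pixMinus, card_filter_range_sub_dlen (nodup_map_range_sword L σ) (· < 0), map_range_sword]

lemma pixPlus_sword :
    pixPlus n (sword n (σ, fun i => decide (σ i ∈ L)))
      = ((signedWord L σ).take (pixLength (signedWord L σ))).countP (¬ · < 0) := by
  rw [← map_range_sword, ← card_filter_range_sub_dlen (nodup_map_range_sword L σ) (¬ · < 0),
    pixPlus]
  refine congrArg card (filter_congr fun i hi => ?_)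
  have hin : i < n := (mem_range.1 hi).trans_le (Nat.sub_le _ _)
  rw [sword_decide_mem L σ ⟨i, hin⟩, signedLetter_pos_iff]

variable {K : Type*} [CommRing K] (q : K)

lemma sum_pow_inversions_signedWord (g : ℕ → ℕ → K) :
    ∑ σ, q ^ inversions (signedWord L σ)
        * g (((signedWord L σ).take (pixLength (signedWord L σ))).countP (· < 0))
            (((signedWord L σ).take (pixLength (signedWord L σ))).countP (¬ · < 0))
      = ∑ s ∈ antidiagonal #L, gaussBinom q s.1 s.2 *
        ∑ t ∈ antidiagonal (n - #L), gaussBinom q t.1 t.2 *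
          (q ^ (t.1 * s.2) * (g s.1 t.1 * Dmaj q (s.2 + t.2))) := by
  have hneg : #((univ.map (signedLetter L)).filter (· < 0)) = #L := by
    rw [filter_map, card_map]
    simp [signedLetter_neg_iff]
  have hpos : #((univ.map (signedLetter L)).filter (¬ · < 0)) = n - #L := by
    rw [← hneg, eq_tsub_iff_add_eq_of_le, add_comm, card_filter_add_card_filter_not, card_map,
      card_fin]
    exact hneg.trans_le (card_finset_fin_le L)
  have h := sum_pow_inversions_mul_countP q (p := (· < (0 : ℤ))) (X := univ.map (signedLetter L))
    (fun a _ b _ ha hb => ha.trans_le (not_lt.1 hb)) g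
  rw [hneg, hpos] at h
  rw [← h]
  exact sum_perm_ofFn (signedLetter L) fun l => q ^ inversions l
    * g ((l.take (pixLength l)).countP (· < 0)) ((l.take (pixLength l)).countP (¬ · < 0))

end Signs

section GeneratingPolynomial

lemma sum_antidiagonalTuple_four {M : Type*} [AddCommMonoid M] (n : ℕ)
    (F : ℕ → ℕ → ℕ → ℕ → M) :
    ∑ c ∈ Nat.antidiagonalTuple 4 n, F (c 0) (c 1) (c 2) (c 3) =
      ∑ p ∈ antidiagonal n, ∑ s ∈ antidiagonal p.1, ∑ t ∈ antidiagonal p.2,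
        F t.1 s.1 s.2 t.2 := by
  simp only [sum_sigma']
  refine sum_bij' (fun c _ => ⟨(c 1 + c 2, c 0 + c 3), (c 1, c 2), (c 0, c 3)⟩)
    (fun r _ => ![r.2.2.1, r.2.1.1, r.2.1.2, r.2.2.2]) ?_ ?_ ?_ ?_ ?_
  · intro c hc
    rw [Nat.mem_antidiagonalTuple, Fin.sum_univ_four] at hc
    simp only [mem_sigma, HasAntidiagonal.mem_antidiagonal, and_true]
    omega
  · rintro ⟨⟨a, b⟩, ⟨j, k⟩, ⟨i, l⟩⟩ h
    simp only [mem_sigma, HasAntidiagonal.mem_antidiagonal] at h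
    simp [Nat.mem_antidiagonalTuple, Fin.sum_univ_four]
    omega
  · intro c _
    ext m
    fin_cases m <;> rfl
  · rintro ⟨⟨a, b⟩, ⟨j, k⟩, ⟨i, l⟩⟩ h
    simp only [mem_sigma, HasAntidiagonal.mem_antidiagonal] at h
    obtain ⟨-, rfl, rfl⟩ := h
    rfl
  · exact fun c _ => rfl

variable {K : Type*} [CommRing K] (q Y0 Y1 Z : K) (n : ℕ)

lemma sum_pow_sum_val_add_one (g : ℕ → ℕ → K) :
    ∑ L : Finset (Fin n), q ^ (∑ v ∈ L, ((v : ℕ) + 1)) * g #L (n - #L)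
      = ∑ p ∈ antidiagonal n, gaussBinom q p.1 p.2 * (q ^ (p.1 + 1).choose 2 * g p.1 p.2) := by
  simpa [filter_gt_eq_Iio] using sum_pow_sum_card_filter_lt_add_one q (univ : Finset (Fin n)) g

theorem sum_pow_lenStat :
    (∑ w : Equiv.Perm (Fin n) × (Fin n → Bool),
        q ^ lenStat n (sword n w) * Y0 ^ pixPlus n (sword n w)
          * Y1 ^ pixMinus n (sword n w) * Z ^ negStat n (sword n w))
      = ∑ p ∈ antidiagonal n, gaussBinom q p.1 p.2 * (q ^ (p.1 + 1).choose 2 * (Z ^ p.1 *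
          ∑ s ∈ antidiagonal p.1, gaussBinom q s.1 s.2 *
            ∑ t ∈ antidiagonal p.2, gaussBinom q t.1 t.2 *
              (q ^ (t.1 * s.2) * (Y1 ^ s.1 * Y0 ^ t.1 * Dmaj q (s.2 + t.2))))) := by
  rw [sum_signed_perm, ← sum_pow_sum_val_add_one q n fun a b => Z ^ a *
    ∑ s ∈ antidiagonal a, gaussBinom q s.1 s.2 * ∑ t ∈ antidiagonal b, gaussBinom q t.1 t.2 *
      (q ^ (t.1 * s.2) * (Y1 ^ s.1 * Y0 ^ t.1 * Dmaj q (s.2 + t.2)))]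
  refine sum_congr rfl fun L _ => ?_
  rw [← sum_pow_inversions_signedWord L q fun a b => Y1 ^ a * Y0 ^ b, mul_sum, mul_sum]
  refine sum_congr rfl fun σ _ => ?_
  rw [lenStat_sword, negStat_sword, pixMinus_sword, pixPlus_sword, pow_add]
  ring1

theorem stmt7_general :
    (∑ w : Equiv.Perm (Fin n) × (Fin n → Bool),
        q ^ lenStat n (sword n w) * Y0 ^ pixPlus n (sword n w)
          * Y1 ^ pixMinus n (sword n w) * Z ^ negStat n (sword n w))
      = ∑ c ∈ Nat.antidiagonalTuple 4 n, qMultinomial q (c 0) (c 1) (c 2) (c 3)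
          * q ^ (c 1 + c 2 + 1).choose 2
          * Y0 ^ c 0 * (Y1 * Z) ^ c 1 * (Z * q ^ c 0) ^ c 2 * Dmaj q (c 2 + c 3) := by
  rw [sum_pow_lenStat, sum_antidiagonalTuple_four n fun i j k l => qMultinomial q i j k l
    * q ^ (j + k + 1).choose 2 * Y0 ^ i * (Y1 * Z) ^ j * (Z * q ^ i) ^ k * Dmaj q (k + l)]
  simp only [mul_sum]
  refine sum_congr rfl fun p _ => sum_congr rfl fun s hs => sum_congr rfl fun t ht => ?_
  rw [HasAntidiagonal.mem_antidiagonal] at hs ht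
  rw [qMultinomial, hs, ht, ← hs]
  ring

end GeneratingPolynomial

theorem stmt7 (K : Type*) [Field K] (q Y0 Y1 Z : K) (n : ℕ)
    (hq : ∀ m ≤ n, qq q m ≠ 0) :
    (∑ w : Equiv.Perm (Fin n) × (Fin n → Bool),
        q ^ lenStat n (sword n w) * Y0 ^ pixPlus n (sword n w)
          * Y1 ^ pixMinus n (sword n w) * Z ^ negStat n (sword n w))
      = ∑ c ∈ Finset.Nat.antidiagonalTuple 4 n,
          (qq q n / (qq q (c 0) * qq q (c 1) * qq q (c 2) * qq q (c 3)))
            * q ^ Nat.choose (c 1 + c 2 + 1) 2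
            * Y0 ^ c 0 * (Y1 * Z) ^ c 1 * (Z * q ^ c 0) ^ c 2 * Dmaj q (c 2 + c 3) := by
  rw [stmt7_general]
  refine sum_congr rfl fun c hc => ?_
  rw [Nat.mem_antidiagonalTuple, Fin.sum_univ_four] at hc
  have hne : qq q (c 0) * qq q (c 1) * qq q (c 2) * qq q (c 3) ≠ 0 := by
    simp only [ne_eq, mul_eq_zero, not_or]
    exact ⟨⟨⟨hq _ (by omega), hq _ (by omega)⟩, hq _ (by omega)⟩, hq _ (by omega)⟩
  rw [eq_div_of_mul_eq hne (qMultinomial_mul_qq q (c 0) (c 1) (c 2) (c 3)), hc]
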